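/- Under the stochastic wide-range Hedge setup, with probability at least 1 − p† the following holds simultaneously for all b ∈ B^s and all swap modifications ψ ∈ Ψ^s: ∑_{t=1}^T M^t_b·(⟨p^t, ℓ̃^t_b⟩ − ⟨ψ∘p^t, ℓ̃^t_b⟩) ≤ η·L̄·∑_{t=1}^T M^t_b·⟨p^t, ℓ̃^t_b⟩ + log((|B^s| + |B^e|)·A^A / p†)/(η·w_b). -/

import Mathlib

/-!
The total weight `Φ_t = ∑_{(b,ψ) ∈ ℐ} w^t(b,ψ)` does not grow in expectation. For scaled losses
`x, y ∈ [0, L̄]`, convexity of `exp` gives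
`exp (η (exp (-η L̄) x - y)) ≤ 1 + (1 - exp (-η L̄)) / L̄ * (x - y)`,
so `Φ_t` exceeds `Φ_{t-1}` by at most a multiple of the weighted regret of round `t`.
Conditionally on the past, every estimate `ℓ̃_b` averages to the same `ℓ`, and the stationarity
equation says precisely that the resulting weighted regret is zero.

Hence `E Φ_T ≤ Φ_0 = (|B^s| + |B^e|) A^(A+1)`, and by Markov's inequality `Φ_T < Φ_0 / p†` with
probability at least `1 - p†`. On that event every single weight is below `Φ_0 / p†`; taking
logarithms and using `1 - η L̄ ≤ exp (-η L̄)` bounds all the regrets at once.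
-/

open Finset MeasureTheory

/-- Pushforward of a vector `p` on `Fin A` under a map `ψ : Fin A → Fin A`:
`(ψ∘p)(a) = ∑_{a' : ψ(a') = a} p(a')`. -/
def pushf {A : ℕ} (ψ : Fin A → Fin A) (p : Fin A → ℝ) : Fin A → ℝ :=
  fun a => ∑ a' ∈ Finset.univ.filter (fun a' => ψ a' = a), p a'

/-- Standard inner product on `ℝ^A`. -/
def ip {A : ℕ} (p ℓ : Fin A → ℝ) : ℝ := ∑ a, p a * ℓ a

/-- The set `Ψ^e` of external (constant) modifications on `Fin A`. -/
def PsiE (A : ℕ) : Finset (Fin A → Fin A) :=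
  Finset.univ.image fun a => Function.const (Fin A) a

section Exp

lemma exp_mul_le_chord {z : ℝ} (hz : z ∈ Set.Icc (0 : ℝ) 1) (k : ℝ) :
    Real.exp (z * k) ≤ 1 + z * (Real.exp k - 1) := by
  have h := convexOn_exp.2 (Set.mem_univ 0) (Set.mem_univ k) (sub_nonneg.2 hz.2) hz.1 (by ring)
  simp only [smul_eq_mul, mul_zero, zero_add, Real.exp_zero, mul_one] at h
  linarith

variable {η L : ℝ}

lemma exp_neg_mul_le_one_sub (hL : 0 < L) {y : ℝ} (hy : y ∈ Set.Icc 0 L) :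
    Real.exp (-(η * y)) ≤ 1 - (1 - Real.exp (-η * L)) / L * y := by
  have h := exp_mul_le_chord ⟨div_nonneg hy.1 hL.le, (div_le_one hL).2 hy.2⟩ (-η * L)
  calc Real.exp (-(η * y)) = Real.exp (y / L * (-η * L)) := by congr 1; field_simp
    _ ≤ 1 + y / L * (Real.exp (-η * L) - 1) := h
    _ = 1 - (1 - Real.exp (-η * L)) / L * y := by ring

-- The discount `exp (-η L)` turns the chord slope `(exp (η L) - 1) / L` into the slope of
-- `exp_neg_mul_le_one_sub`, which is what makes the two bounds combine.
lemma exp_mul_discount_le_one_add (hη : 0 ≤ η) (hL : 0 < L) {x : ℝ} (hx : x ∈ Set.Icc 0 L) :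
    Real.exp (η * (Real.exp (-η * L) * x)) ≤ 1 + (1 - Real.exp (-η * L)) / L * x := by
  set β := Real.exp (-η * L) with hβ
  have hβ₀ : 0 ≤ β := (Real.exp_pos _).le
  have hβ₁ : β ≤ 1 := Real.exp_le_one_iff.2 (by nlinarith)
  have hβ_inv : Real.exp (η * L) * β = 1 := by
    rw [hβ, ← Real.exp_add, neg_mul, add_neg_cancel, Real.exp_zero]
  have hz : β * (x / L) ∈ Set.Icc (0 : ℝ) 1 :=
    ⟨mul_nonneg hβ₀ (div_nonneg hx.1 hL.le),
      mul_le_one₀ hβ₁ (div_nonneg hx.1 hL.le) ((div_le_one hL).2 hx.2)⟩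
  calc Real.exp (η * (β * x)) = Real.exp (β * (x / L) * (η * L)) := by congr 1; field_simp
    _ ≤ 1 + β * (x / L) * (Real.exp (η * L) - 1) := exp_mul_le_chord hz _
    _ = 1 + (Real.exp (η * L) * β - β) / L * x := by ring
    _ = 1 + (1 - β) / L * x := by rw [hβ_inv]

lemma exp_mul_discount_sub_le (hη : 0 ≤ η) (hL : 0 < L) {x y : ℝ}
    (hx : x ∈ Set.Icc 0 L) (hy : y ∈ Set.Icc 0 L) :
    Real.exp (η * (Real.exp (-η * L) * x - y))
      ≤ 1 + (1 - Real.exp (-η * L)) / L * (x - y) := by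
  set c := (1 - Real.exp (-η * L)) / L
  have hc : 0 ≤ c := div_nonneg (sub_nonneg.2 (Real.exp_le_one_iff.2 (by nlinarith))) hL.le
  have hcx : 0 ≤ c * x := mul_nonneg hc hx.1
  calc Real.exp (η * (Real.exp (-η * L) * x - y))
      = Real.exp (η * (Real.exp (-η * L) * x)) * Real.exp (-(η * y)) := by
        rw [← Real.exp_add, mul_sub, sub_eq_add_neg]
    _ ≤ (1 + c * x) * (1 - c * y) :=
        mul_le_mul (exp_mul_discount_le_one_add hη hL hx) (exp_neg_mul_le_one_sub hL hy)
          (Real.exp_pos _).le (by linarith)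
    _ = 1 + c * (x - y) - c * x * (c * y) := by ring
    _ ≤ 1 + c * (x - y) := sub_le_self _ (mul_nonneg hcx (mul_nonneg hc hy.1))

end Exp

section Probability

variable {Ω : Type*} {m mΩ : MeasurableSpace Ω} {μ : Measure Ω}

lemma ofReal_one_sub_le_measure_lt_div [IsProbabilityMeasure μ] {f : Ω → ℝ} (hf₀ : 0 ≤ᵐ[μ] f)
    (hf : Integrable f μ) {C δ : ℝ} (hC : 0 < C) (hδ : 0 < δ) (hfC : ∫ ω, f ω ∂μ ≤ C) :
    ENNReal.ofReal (1 - δ) ≤ μ {ω | f ω < C / δ} := by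
  have hmarkov : μ.real {ω | C / δ ≤ f ω} ≤ δ := by
    refine le_of_mul_le_mul_left ?_ (div_pos hC hδ)
    rw [div_mul_cancel₀ _ hδ.ne']
    exact (mul_meas_ge_le_integral_of_nonneg hf₀ hf _).trans hfC
  have hcompl : {ω | f ω < C / δ} = {ω | C / δ ≤ f ω}ᶜ := by
    ext ω; simp only [Set.mem_ofPred_eq, Set.mem_compl_iff, not_le]
  have hmeas : NullMeasurableSet {ω | C / δ ≤ f ω} μ :=
    nullMeasurableSet_le aemeasurable_const hf.aemeasurable
  rw [hcompl, prob_compl_eq_one_sub₀ hmeas, ENNReal.ofReal_sub _ hδ.le, ENNReal.ofReal_one]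
  exact tsub_le_tsub_left ((ENNReal.le_ofReal_iff_toReal_le (measure_ne_top _ _) hδ.le).2 hmarkov) 1

lemma integral_sum_mul_eq_zero_of_condExp [IsFiniteMeasure μ] (hm : m ≤ mΩ) {κ : Type*}
    {K : Finset κ} {g f : κ → Ω → ℝ} (hg : ∀ k ∈ K, StronglyMeasurable[m] (g k))
    (hf : ∀ k ∈ K, Integrable (f k) μ) (hgf : ∀ k ∈ K, Integrable (g k * f k) μ)
    (hzero : ∀ᵐ ω ∂μ, ∑ k ∈ K, g k ω * (μ[f k | m]) ω = 0) :
    ∫ ω, ∑ k ∈ K, g k ω * f k ω ∂μ = 0 := by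
  have hpull : ∀ᵐ ω ∂μ, ∀ k ∈ K, (μ[g k * f k | m]) ω = g k ω * (μ[f k | m]) ω :=
    (Finset.eventually_all _).2 fun k hk ↦
      condExp_mul_of_stronglyMeasurable_left (hg k hk) (hgf k hk) (hf k hk)
  calc ∫ ω, ∑ k ∈ K, g k ω * f k ω ∂μ = ∫ ω, (∑ k ∈ K, g k * f k) ω ∂μ := by
        simp only [Finset.sum_apply, Pi.mul_apply]
    _ = ∫ ω, (μ[∑ k ∈ K, g k * f k | m]) ω ∂μ := (integral_condExp hm).symm
    _ = 0 := by
        refine integral_eq_zero_of_ae ?_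
        filter_upwards [condExp_finsetSum hgf m, hpull, hzero] with ω hsum hpullω hzeroω
        rw [hsum, Finset.sum_apply, sum_congr rfl hpullω, hzeroω, Pi.zero_apply]

end Probability

section HedgeWeight

variable {ι Ω : Type*}

/-- The exponential weight of expert `i` after rounds `1, …, t`, from the initial weight `w₀ i`.
In round `s`, `x s i` is the learner's loss as measured against expert `i`, discounted by
`exp (-η L)`, and `y s i` is the loss of expert `i`. -/
noncomputable def hedgeWeight (η L : ℝ) (w₀ : ι → ℝ) (x y : ℕ → ι → Ω → ℝ)
    (t : ℕ) (i : ι) (ω : Ω) : ℝ :=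
  w₀ i * Real.exp (η * ∑ s ∈ Icc 1 t, (Real.exp (-η * L) * x s i ω - y s i ω))

variable {η L : ℝ} {w₀ : ι → ℝ} {x y : ℕ → ι → Ω → ℝ} {t T : ℕ} {i : ι} {I : Finset ι} {ω : Ω}

lemma hedgeWeight_zero : hedgeWeight η L w₀ x y 0 i ω = w₀ i := by
  simp [hedgeWeight]

lemma hedgeWeight_succ :
    hedgeWeight η L w₀ x y (t + 1) i ω = hedgeWeight η L w₀ x y t i ω *
      Real.exp (η * (Real.exp (-η * L) * x (t + 1) i ω - y (t + 1) i ω)) := by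
  rw [hedgeWeight, hedgeWeight, sum_Icc_succ_top (Nat.le_add_left 1 t), mul_add, Real.exp_add,
    mul_assoc]

lemma hedgeWeight_nonneg (hw₀ : 0 ≤ w₀ i) : 0 ≤ hedgeWeight η L w₀ x y t i ω :=
  mul_nonneg hw₀ (Real.exp_pos _).le

lemma hedgeWeight_le (hη : 0 ≤ η) (hw₀ : 0 ≤ w₀ i) (hx : ∀ s ∈ Icc 1 t, x s i ω ∈ Set.Icc 0 L)
    (hy : ∀ s ∈ Icc 1 t, 0 ≤ y s i ω) :
    hedgeWeight η L w₀ x y t i ω ≤ w₀ i * Real.exp (η * (t * L)) := by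
  have hgain : ∀ s ∈ Icc 1 t, Real.exp (-η * L) * x s i ω - y s i ω ≤ L := fun s hs ↦ by
    have hL : 0 ≤ L := (hx s hs).1.trans (hx s hs).2
    have hdiscount := mul_le_of_le_one_left (hx s hs).1
      (Real.exp_le_one_iff.2 (by nlinarith : -η * L ≤ 0))
    linarith [(hx s hs).2, hy s hs]
  have hsum := sum_le_card_nsmul _ _ _ hgain
  rw [Nat.card_Icc, Nat.add_sub_cancel, nsmul_eq_mul] at hsum
  unfold hedgeWeight
  gcongr

lemma sum_hedgeWeight_succ_le (hη : 0 ≤ η) (hL : 0 < L) (hw₀ : ∀ i ∈ I, 0 ≤ w₀ i)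
    (hx : ∀ i ∈ I, x (t + 1) i ω ∈ Set.Icc 0 L) (hy : ∀ i ∈ I, y (t + 1) i ω ∈ Set.Icc 0 L) :
    ∑ i ∈ I, hedgeWeight η L w₀ x y (t + 1) i ω ≤ ∑ i ∈ I, hedgeWeight η L w₀ x y t i ω +
      (1 - Real.exp (-η * L)) / L *
        ∑ i ∈ I, hedgeWeight η L w₀ x y t i ω * (x (t + 1) i ω - y (t + 1) i ω) := by
  rw [mul_sum, ← sum_add_distrib]
  refine sum_le_sum fun i hi ↦ ?_
  rw [hedgeWeight_succ]
  refine (mul_le_mul_of_nonneg_left (exp_mul_discount_sub_le hη hL (hx i hi) (hy i hi))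
    (hedgeWeight_nonneg (hw₀ i hi))).trans_eq ?_
  ring

lemma sum_sub_le_of_hedgeWeight_le (hη : 0 < η) (hw₀ : 0 < w₀ i)
    (hx : ∀ t ∈ Icc 1 T, 0 ≤ x t i ω) {K : ℝ} (hK : hedgeWeight η L w₀ x y T i ω ≤ K) :
    ∑ t ∈ Icc 1 T, (x t i ω - y t i ω) ≤
      η * L * ∑ t ∈ Icc 1 T, x t i ω + Real.log (K / w₀ i) / η := by
  have hlog : η * ∑ t ∈ Icc 1 T, (Real.exp (-η * L) * x t i ω - y t i ω) ≤ Real.log (K / w₀ i) := by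
    rw [← Real.log_exp (η * _)]
    exact Real.log_le_log (Real.exp_pos _) ((le_div_iff₀' hw₀).2 hK)
  have hdiscounted : Real.exp (-η * L) * ∑ t ∈ Icc 1 T, x t i ω - ∑ t ∈ Icc 1 T, y t i ω ≤
      Real.log (K / w₀ i) / η := by
    rwa [le_div_iff₀' hη, mul_sum, ← sum_sub_distrib]
  have hexp : (1 - η * L) * ∑ t ∈ Icc 1 T, x t i ω ≤
      Real.exp (-η * L) * ∑ t ∈ Icc 1 T, x t i ω :=
    mul_le_mul_of_nonneg_right (by linarith [Real.add_one_le_exp (-η * L)]) (sum_nonneg hx)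
  rw [sum_sub_distrib]
  linarith

variable {mΩ : MeasurableSpace Ω}

lemma measurable_hedgeWeight (hx : ∀ s ∈ Icc 1 t, Measurable (x s i))
    (hy : ∀ s ∈ Icc 1 t, Measurable (y s i)) : Measurable (hedgeWeight η L w₀ x y t i) :=
  ((Finset.measurable_fun_sum _ fun s hs ↦
    ((hx s hs).const_mul _).sub (hy s hs)).const_mul _).exp.const_mul _

variable {μ : Measure Ω}

lemma integrable_hedgeWeight [IsFiniteMeasure μ] (hη : 0 ≤ η) (hw₀ : 0 ≤ w₀ i)
    (hxm : ∀ s ∈ Icc 1 t, Measurable (x s i)) (hym : ∀ s ∈ Icc 1 t, Measurable (y s i))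
    (hx : ∀ s ∈ Icc 1 t, ∀ᵐ ω ∂μ, x s i ω ∈ Set.Icc 0 L)
    (hy : ∀ s ∈ Icc 1 t, ∀ᵐ ω ∂μ, y s i ω ∈ Set.Icc 0 L) :
    Integrable (hedgeWeight η L w₀ x y t i) μ := by
  refine .of_mem_Icc 0 (w₀ i * Real.exp (η * (t * L))) (measurable_hedgeWeight hxm hym).aemeasurable
    ?_
  filter_upwards [(Finset.eventually_all _).2 hx, (Finset.eventually_all _).2 hy] with ω hxω hyω
  exact ⟨hedgeWeight_nonneg hw₀, hedgeWeight_le hη hw₀ hxω fun s hs ↦ (hyω s hs).1⟩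

lemma integral_sum_hedgeWeight_succ_le [IsFiniteMeasure μ] (hη : 0 ≤ η) (hL : 0 < L)
    (hw₀ : ∀ i ∈ I, 0 ≤ w₀ i)
    (hw : ∀ i ∈ I, Integrable (hedgeWeight η L w₀ x y t i) μ)
    (hw_succ : ∀ i ∈ I, Integrable (hedgeWeight η L w₀ x y (t + 1) i) μ)
    (hxm : ∀ i ∈ I, Measurable (x (t + 1) i)) (hym : ∀ i ∈ I, Measurable (y (t + 1) i))
    (hx : ∀ i ∈ I, ∀ᵐ ω ∂μ, x (t + 1) i ω ∈ Set.Icc 0 L)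
    (hy : ∀ i ∈ I, ∀ᵐ ω ∂μ, y (t + 1) i ω ∈ Set.Icc 0 L)
    (hregret : ∫ ω, ∑ i ∈ I,
      hedgeWeight η L w₀ x y t i ω * (x (t + 1) i ω - y (t + 1) i ω) ∂μ ≤ 0) :
    ∫ ω, ∑ i ∈ I, hedgeWeight η L w₀ x y (t + 1) i ω ∂μ ≤
      ∫ ω, ∑ i ∈ I, hedgeWeight η L w₀ x y t i ω ∂μ := by
  set c := (1 - Real.exp (-η * L)) / L
  have hc : 0 ≤ c := div_nonneg (sub_nonneg.2 (Real.exp_le_one_iff.2 (by nlinarith))) hL.le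
  have hwI := integrable_finsetSum I hw
  have hr : Integrable (fun ω ↦ ∑ i ∈ I, hedgeWeight η L w₀ x y t i ω *
      (x (t + 1) i ω - y (t + 1) i ω)) μ := by
    refine integrable_finsetSum _ fun i hi ↦ (hw i hi).mul_bdd (c := L)
      ((hxm i hi).sub (hym i hi)).aestronglyMeasurable ?_
    filter_upwards [hx i hi, hy i hi] with ω hxω hyω
    simpa only [sub_zero, Real.dist_eq, Real.norm_eq_abs] using Real.dist_le_of_mem_Icc hxω hyω
  calc ∫ ω, ∑ i ∈ I, hedgeWeight η L w₀ x y (t + 1) i ω ∂μ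
      ≤ ∫ ω, (∑ i ∈ I, hedgeWeight η L w₀ x y t i ω +
          c * ∑ i ∈ I, hedgeWeight η L w₀ x y t i ω * (x (t + 1) i ω - y (t + 1) i ω)) ∂μ := by
        refine integral_mono_ae (integrable_finsetSum _ hw_succ) (hwI.add (hr.const_mul c)) ?_
        filter_upwards [(Finset.eventually_all _).2 hx, (Finset.eventually_all _).2 hy]
          with ω hxω hyω
        exact sum_hedgeWeight_succ_le hη hL hw₀ hxω hyω
    _ = ∫ ω, ∑ i ∈ I, hedgeWeight η L w₀ x y t i ω ∂μ +
          c * ∫ ω, ∑ i ∈ I, hedgeWeight η L w₀ x y t i ω *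
            (x (t + 1) i ω - y (t + 1) i ω) ∂μ := by
        rw [integral_add hwI (hr.const_mul c), integral_const_mul]
    _ ≤ ∫ ω, ∑ i ∈ I, hedgeWeight η L w₀ x y t i ω ∂μ :=
        add_le_of_nonpos_right (mul_nonpos_of_nonneg_of_nonpos hc hregret)

lemma integral_sum_hedgeWeight_le [IsProbabilityMeasure μ] (hη : 0 ≤ η) (hL : 0 < L)
    (hw₀ : ∀ i ∈ I, 0 ≤ w₀ i)
    (hw : ∀ t ≤ T, ∀ i ∈ I, Integrable (hedgeWeight η L w₀ x y t i) μ)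
    (hxm : ∀ t ∈ Icc 1 T, ∀ i ∈ I, Measurable (x t i))
    (hym : ∀ t ∈ Icc 1 T, ∀ i ∈ I, Measurable (y t i))
    (hx : ∀ t ∈ Icc 1 T, ∀ i ∈ I, ∀ᵐ ω ∂μ, x t i ω ∈ Set.Icc 0 L)
    (hy : ∀ t ∈ Icc 1 T, ∀ i ∈ I, ∀ᵐ ω ∂μ, y t i ω ∈ Set.Icc 0 L)
    (hregret : ∀ t ∈ Icc 1 T,
      ∫ ω, ∑ i ∈ I, hedgeWeight η L w₀ x y (t - 1) i ω * (x t i ω - y t i ω) ∂μ ≤ 0) :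
    ∫ ω, ∑ i ∈ I, hedgeWeight η L w₀ x y T i ω ∂μ ≤ ∑ i ∈ I, w₀ i := by
  suffices ∀ t ≤ T, ∫ ω, ∑ i ∈ I, hedgeWeight η L w₀ x y t i ω ∂μ ≤ ∑ i ∈ I, w₀ i from this T le_rfl
  intro t
  induction t with
  | zero => simp [hedgeWeight_zero]
  | succ t ih =>
    intro ht
    have ht' : t + 1 ∈ Icc 1 T := mem_Icc.2 ⟨t.succ_pos, ht⟩
    have hregret' := hregret _ ht'
    rw [Nat.add_sub_cancel] at hregret'
    exact (integral_sum_hedgeWeight_succ_le hη hL hw₀ (hw t (t.le_succ.trans ht)) (hw _ ht)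
      (hxm _ ht') (hym _ ht') (hx _ ht') (hy _ ht') hregret').trans
      (ih (t.le_succ.trans ht))

theorem ofReal_one_sub_le_measure_hedge_regret_le [IsProbabilityMeasure μ] (hη : 0 < η) (hL : 0 < L)
    {δ : ℝ} (hδ : 0 < δ) (hI : I.Nonempty) (hw₀ : ∀ i ∈ I, 0 < w₀ i)
    (hxm : ∀ t ∈ Icc 1 T, ∀ i ∈ I, Measurable (x t i))
    (hym : ∀ t ∈ Icc 1 T, ∀ i ∈ I, Measurable (y t i))
    (hx : ∀ t ∈ Icc 1 T, ∀ i ∈ I, ∀ᵐ ω ∂μ, x t i ω ∈ Set.Icc 0 L)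
    (hy : ∀ t ∈ Icc 1 T, ∀ i ∈ I, ∀ᵐ ω ∂μ, y t i ω ∈ Set.Icc 0 L)
    (hregret : ∀ t ∈ Icc 1 T,
      ∫ ω, ∑ i ∈ I, hedgeWeight η L w₀ x y (t - 1) i ω * (x t i ω - y t i ω) ∂μ ≤ 0) :
    ENNReal.ofReal (1 - δ) ≤ μ {ω | ∀ i ∈ I, ∑ t ∈ Icc 1 T, (x t i ω - y t i ω) ≤
      η * L * ∑ t ∈ Icc 1 T, x t i ω + Real.log ((∑ j ∈ I, w₀ j) / δ / w₀ i) / η} := by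
  have hw : ∀ t ≤ T, ∀ i ∈ I, Integrable (hedgeWeight η L w₀ x y t i) μ := fun t ht i hi ↦
    have hsub : ∀ s ∈ Icc 1 t, s ∈ Icc 1 T := fun s hs ↦ Icc_subset_Icc_right ht hs
    integrable_hedgeWeight hη.le (hw₀ i hi).le (fun s hs ↦ hxm s (hsub s hs) i hi)
      (fun s hs ↦ hym s (hsub s hs) i hi) (fun s hs ↦ hx s (hsub s hs) i hi)
      (fun s hs ↦ hy s (hsub s hs) i hi)
  have hnonneg : ∀ i ∈ I, ∀ ω, 0 ≤ hedgeWeight η L w₀ x y T i ω := fun i hi ω ↦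
    hedgeWeight_nonneg (hw₀ i hi).le
  refine (ofReal_one_sub_le_measure_lt_div
    (ae_of_all _ fun ω ↦ sum_nonneg fun i hi ↦ hnonneg i hi ω)
    (integrable_finsetSum _ (hw T le_rfl)) (sum_pos hw₀ hI) hδ
    (integral_sum_hedgeWeight_le hη.le hL (fun i hi ↦ (hw₀ i hi).le) hw hxm hym hx hy
      hregret)).trans (measure_mono_ae ?_)
  have hx_all : ∀ᵐ ω ∂μ, ∀ t ∈ Icc 1 T, ∀ i ∈ I, x t i ω ∈ Set.Icc 0 L :=
    (Finset.eventually_all _).2 fun t ht ↦ (Finset.eventually_all _).2 (hx t ht)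
  filter_upwards [hx_all] with ω hxω hΦ i hi
  exact sum_sub_le_of_hedgeWeight_le hη (hw₀ i hi) (fun t ht ↦ (hxω t ht i hi).1)
    ((single_le_sum (fun j hj ↦ hnonneg j hj ω) hi).trans (le_of_lt hΦ))

end HedgeWeight

section InnerProduct

variable {A : ℕ} {p q v : Fin A → ℝ}

lemma ip_sub_ip (p q v : Fin A → ℝ) : ip p v - ip q v = ∑ a, (p a - q a) * v a := by
  simp only [ip, sub_mul, sum_sub_distrib]

lemma ip_smul (p v : Fin A → ℝ) (c : ℝ) : ip p (c • v) = c * ip p v := by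
  simp only [ip, Pi.smul_apply, smul_eq_mul, mul_sum, mul_left_comm]

lemma ip_mem_of_convex {s : Set ℝ} (hs : Convex ℝ s) (hp : p ∈ stdSimplex ℝ (Fin A))
    (hv : ∀ a, v a ∈ s) : ip p v ∈ s :=
  hs.sum_mem (fun a _ ↦ hp.1 a) hp.2 fun a _ ↦ hv a

lemma pushf_mem_stdSimplex (ψ : Fin A → Fin A) (hp : p ∈ stdSimplex ℝ (Fin A)) :
    pushf ψ p ∈ stdSimplex ℝ (Fin A) :=
  ⟨fun _ ↦ sum_nonneg fun a _ ↦ hp.1 a, (sum_fiberwise univ ψ p).trans hp.2⟩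

lemma measurable_pushf (ψ : Fin A → Fin A) : Measurable (pushf ψ) :=
  measurable_pi_lambda _ fun _ ↦ Finset.measurable_fun_sum _ fun a _ ↦ measurable_pi_apply a

lemma measurable_ip {Ω : Type*} {_ : MeasurableSpace Ω} {p v : Ω → Fin A → ℝ} (hp : Measurable p)
    (hv : Measurable v) : Measurable fun ω ↦ ip (p ω) (v ω) :=
  Finset.measurable_fun_sum _ fun a _ ↦ (hp.eval (a := a)).mul hv.eval

end InnerProduct

section Stationarity

variable {ι Ω : Type*} {A : ℕ} {m mΩ : MeasurableSpace Ω} {μ : Measure Ω} {I : Finset ι}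

lemma integrable_mul_sub_of_mem_stdSimplex {V : Ω → ℝ} (hV : Integrable V μ)
    {p q : Ω → Fin A → ℝ} (hp : Measurable p) (hp_mem : ∀ ω, p ω ∈ stdSimplex ℝ (Fin A))
    (hq : Measurable q) (hq_mem : ∀ ω, q ω ∈ stdSimplex ℝ (Fin A)) (a : Fin A) :
    Integrable (fun ω ↦ V ω * (p ω a - q ω a)) μ :=
  hV.mul_bdd (c := 1) (hp.eval.sub hq.eval).aestronglyMeasurable <| ae_of_all _ fun ω ↦
    Real.dist_le_of_mem_Icc_01 (mem_Icc_of_mem_stdSimplex (hp_mem ω) a)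
      (mem_Icc_of_mem_stdSimplex (hq_mem ω) a)

lemma integral_sum_mul_ip_sub_ip_eq_zero [IsFiniteMeasure μ] (hm : m ≤ mΩ) {V : ι → Ω → ℝ}
    (hV : ∀ i ∈ I, Measurable[m] (V i)) (hVint : ∀ i ∈ I, Integrable (V i) μ)
    {p : Ω → Fin A → ℝ} (hp : Measurable[m] p) (hp_mem : ∀ ω, p ω ∈ stdSimplex ℝ (Fin A))
    {q : ι → Ω → Fin A → ℝ} (hq : ∀ i ∈ I, Measurable[m] (q i))
    (hq_mem : ∀ i ∈ I, ∀ ω, q i ω ∈ stdSimplex ℝ (Fin A))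
    {f : ι → Ω → Fin A → ℝ} (hf : ∀ i ∈ I, Measurable (f i)) {L : ℝ}
    (hf_mem : ∀ i ∈ I, ∀ a, ∀ᵐ ω ∂μ, f i ω a ∈ Set.Icc 0 L)
    {S : ι → Ω → ℝ} {ℓ : Ω → Fin A → ℝ}
    (hcond : ∀ i ∈ I, ∀ a, μ[fun ω ↦ f i ω a | m] =ᵐ[μ] fun ω ↦ S i ω * ℓ ω a)
    (hstat : ∀ᵐ ω ∂μ, ∀ a, ∑ i ∈ I, V i ω * S i ω * p ω a = ∑ i ∈ I, V i ω * S i ω * q i ω a) :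
    ∫ ω, ∑ i ∈ I, V i ω * (ip (p ω) (f i ω) - ip (q i ω) (f i ω)) ∂μ = 0 := by
  let g : ι × Fin A → Ω → ℝ := fun k ω ↦ V k.1 ω * (p ω k.2 - q k.1 ω k.2)
  have hI : ∀ k ∈ I ×ˢ (univ : Finset (Fin A)), k.1 ∈ I := fun k hk ↦ (mem_product.1 hk).1
  have hg : ∀ k ∈ I ×ˢ univ, Measurable[m] (g k) := fun k hk ↦ (hV k.1 (hI k hk)).mul <|
    ((measurable_pi_apply k.2).comp hp).sub ((measurable_pi_apply k.2).comp (hq k.1 (hI k hk)))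
  have hgint : ∀ k ∈ I ×ˢ univ, Integrable (g k) μ := fun k hk ↦
    integrable_mul_sub_of_mem_stdSimplex (hVint _ (hI k hk)) (hp.mono hm le_rfl) hp_mem
      ((hq _ (hI k hk)).mono hm le_rfl) (hq_mem _ (hI k hk)) k.2
  have hfint : ∀ k ∈ I ×ˢ univ, Integrable (fun ω ↦ f k.1 ω k.2) μ := fun k hk ↦
    .of_mem_Icc 0 L (hf _ (hI k hk)).eval.aemeasurable (hf_mem _ (hI k hk) k.2)
  have hgf : ∀ k ∈ I ×ˢ univ, Integrable (g k * fun ω ↦ f k.1 ω k.2) μ := fun k hk ↦ by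
    refine (hgint k hk).mul_bdd (c := L) (hf _ (hI k hk)).eval.aestronglyMeasurable ?_
    filter_upwards [hf_mem _ (hI k hk) k.2] with ω hω
    exact (Real.norm_of_nonneg hω.1).trans_le hω.2
  have hfcond : ∀ᵐ ω ∂μ, ∀ k ∈ I ×ˢ univ, (μ[fun ω ↦ f k.1 ω k.2 | m]) ω = S k.1 ω * ℓ ω k.2 :=
    (Finset.eventually_all _).2 fun k hk ↦ hcond _ (hI k hk) k.2
  have hzero : ∀ᵐ ω ∂μ, ∑ k ∈ I ×ˢ univ, g k ω * (μ[fun ω ↦ f k.1 ω k.2 | m]) ω = 0 := by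
    filter_upwards [hfcond, hstat] with ω hcondω hstatω
    rw [sum_congr rfl fun k hk ↦ by rw [hcondω k hk], sum_product_right]
    refine sum_eq_zero fun a _ ↦ ?_
    calc ∑ i ∈ I, g (i, a) ω * (S i ω * ℓ ω a)
        = (∑ i ∈ I, V i ω * S i ω * p ω a - ∑ i ∈ I, V i ω * S i ω * q i ω a) * ℓ ω a := by
          rw [← sum_sub_distrib, sum_mul]
          exact sum_congr rfl fun i _ ↦ by ring
      _ = 0 := by rw [hstatω a, sub_self, zero_mul]
  simpa only [ip_sub_ip, mul_sum, sum_product, g, mul_assoc] using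
    integral_sum_mul_eq_zero_of_condExp hm (fun k hk ↦ (hg k hk).stronglyMeasurable) hfint hgf hzero

theorem ofReal_one_sub_le_measure_hedge_regret_le_of_stationary [IsProbabilityMeasure μ]
    {𝔉 : Filtration ℕ mΩ} {T : ℕ} {η L δ : ℝ} (hη : 0 < η) (hL : 0 < L) (hδ : 0 < δ)
    (hI : I.Nonempty) {w₀ : ι → ℝ} (hw₀ : ∀ i ∈ I, 0 < w₀ i)
    {p : ℕ → Ω → Fin A → ℝ} (hp : ∀ t ∈ Icc 1 T, Measurable[𝔉 (t - 1)] (p t))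
    (hp_mem : ∀ t ∈ Icc 1 T, ∀ ω, p t ω ∈ stdSimplex ℝ (Fin A))
    {q : ℕ → ι → Ω → Fin A → ℝ}
    (hq : ∀ t ∈ Icc 1 T, ∀ i ∈ I, Measurable[𝔉 (t - 1)] (q t i))
    (hq_mem : ∀ t ∈ Icc 1 T, ∀ i ∈ I, ∀ ω, q t i ω ∈ stdSimplex ℝ (Fin A))
    {f : ℕ → ι → Ω → Fin A → ℝ} (hf : ∀ t ∈ Icc 1 T, ∀ i ∈ I, Measurable[𝔉 t] (f t i))
    (hf_mem : ∀ t ∈ Icc 1 T, ∀ i ∈ I, ∀ a, ∀ᵐ ω ∂μ, f t i ω a ∈ Set.Icc 0 L)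
    {S : ℕ → ι → Ω → ℝ} {ℓ : ℕ → Ω → Fin A → ℝ}
    (hcond : ∀ t ∈ Icc 1 T, ∀ i ∈ I, ∀ a,
      μ[fun ω ↦ f t i ω a | 𝔉 (t - 1)] =ᵐ[μ] fun ω ↦ S t i ω * ℓ t ω a)
    {x y : ℕ → ι → Ω → ℝ} (hx : ∀ t i ω, x t i ω = ip (p t ω) (f t i ω))
    (hy : ∀ t i ω, y t i ω = ip (q t i ω) (f t i ω))
    (hstat : ∀ t ∈ Icc 1 T, ∀ᵐ ω ∂μ, ∀ a,
      ∑ i ∈ I, hedgeWeight η L w₀ x y (t - 1) i ω * S t i ω * p t ω a =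
        ∑ i ∈ I, hedgeWeight η L w₀ x y (t - 1) i ω * S t i ω * q t i ω a) :
    ENNReal.ofReal (1 - δ) ≤ μ {ω | ∀ i ∈ I, ∑ t ∈ Icc 1 T, (x t i ω - y t i ω) ≤
      η * L * ∑ t ∈ Icc 1 T, x t i ω + Real.log ((∑ j ∈ I, w₀ j) / δ / w₀ i) / η} := by
  obtain rfl : x = fun t i ω ↦ ip (p t ω) (f t i ω) := by ext; apply hx
  obtain rfl : y = fun t i ω ↦ ip (q t i ω) (f t i ω) := by ext; apply hy
  have hx_meas : ∀ t ∈ Icc 1 T, ∀ i ∈ I, Measurable[𝔉 t] fun ω ↦ ip (p t ω) (f t i ω) :=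
    fun t ht i hi ↦ measurable_ip ((hp t ht).mono (𝔉.mono (t.sub_le 1)) le_rfl) (hf t ht i hi)
  have hy_meas : ∀ t ∈ Icc 1 T, ∀ i ∈ I, Measurable[𝔉 t] fun ω ↦ ip (q t i ω) (f t i ω) :=
    fun t ht i hi ↦ measurable_ip ((hq t ht i hi).mono (𝔉.mono (t.sub_le 1)) le_rfl) (hf t ht i hi)
  have hip_mem : ∀ t ∈ Icc 1 T, ∀ i ∈ I, ∀ r : Ω → Fin A → ℝ,
      (∀ ω, r ω ∈ stdSimplex ℝ (Fin A)) → ∀ᵐ ω ∂μ, ip (r ω) (f t i ω) ∈ Set.Icc 0 L :=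
    fun t ht i hi r hr ↦ by
      filter_upwards [ae_all_iff.2 (hf_mem t ht i hi)] with ω hω
      exact ip_mem_of_convex (convex_Icc 0 L) (hr ω) hω
  have hx_mem := fun t ht i hi ↦ hip_mem t ht i hi (p t) (hp_mem t ht)
  have hy_mem := fun t ht i hi ↦ hip_mem t ht i hi (q t i) (hq_mem t ht i hi)
  refine ofReal_one_sub_le_measure_hedge_regret_le hη hL hδ hI hw₀
    (fun t ht i hi ↦ (hx_meas t ht i hi).mono (𝔉.le t) le_rfl)
    (fun t ht i hi ↦ (hy_meas t ht i hi).mono (𝔉.le t) le_rfl) hx_mem hy_mem fun t ht ↦ ?_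
  have hpast : ∀ s ∈ Icc 1 (t - 1), s ∈ Icc 1 T ∧ 𝔉 s ≤ 𝔉 (t - 1) := fun s hs ↦ by
    rw [mem_Icc] at hs ht ⊢
    exact ⟨⟨hs.1, by omega⟩, 𝔉.mono hs.2⟩
  refine (integral_sum_mul_ip_sub_ip_eq_zero (𝔉.le (t - 1)) (fun i hi ↦ ?_) (fun i hi ↦ ?_)
    (hp t ht) (hp_mem t ht) (hq t ht) (hq_mem t ht)
    (fun i hi ↦ (hf t ht i hi).mono (𝔉.le t) le_rfl) (hf_mem t ht) (hcond t ht) (hstat t ht)).le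
  · exact measurable_hedgeWeight
      (fun s hs ↦ (hx_meas s (hpast s hs).1 i hi).mono (hpast s hs).2 le_rfl)
      (fun s hs ↦ (hy_meas s (hpast s hs).1 i hi).mono (hpast s hs).2 le_rfl)
  · exact integrable_hedgeWeight hη.le (hw₀ i hi).le
      (fun s hs ↦ (hx_meas s (hpast s hs).1 i hi).mono (𝔉.le s) le_rfl)
      (fun s hs ↦ (hy_meas s (hpast s hs).1 i hi).mono (𝔉.le s) le_rfl)
      (fun s hs ↦ hx_mem s (hpast s hs).1 i hi) (fun s hs ↦ hy_mem s (hpast s hs).1 i hi)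

end Stationarity

lemma sum_mul_sub_le_of_scaled {κ : Type*} {K : Finset κ} {m u v : κ → ℝ} {w c C η : ℝ}
    (hw : 0 < w)
    (h : ∑ t ∈ K, (w * m t * u t - w * m t * v t) ≤ c * ∑ t ∈ K, w * m t * u t + C / η) :
    ∑ t ∈ K, m t * (u t - v t) ≤ c * ∑ t ∈ K, m t * u t + C / (η * w) := by
  refine le_of_mul_le_mul_left ?_ hw
  calc w * ∑ t ∈ K, m t * (u t - v t) = ∑ t ∈ K, (w * m t * u t - w * m t * v t) := by
        rw [mul_sum]
        exact sum_congr rfl fun t _ ↦ by ring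
    _ ≤ c * ∑ t ∈ K, w * m t * u t + C / η := h
    _ = w * (c * ∑ t ∈ K, m t * u t + C / (η * w)) := by
        rw [mul_add, mul_left_comm]
        congr 1
        · simp only [mul_sum, mul_assoc]
        · field_simp

theorem ofReal_one_sub_le_measure_wideRange_regret_le {Ω B : Type*} {mΩ : MeasurableSpace Ω}
    {μ : Measure Ω} [IsProbabilityMeasure μ] {𝔉 : Filtration ℕ mΩ} {A T : ℕ} {η L δ : ℝ}
    (hη : 0 < η) (hL : 0 < L) (hδ : 0 < δ) {J : Finset B} {I : Finset (B × (Fin A → Fin A))}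
    (hI : I.Nonempty) (hIJ : ∀ i ∈ I, i.1 ∈ J)
    {w₀ : B × (Fin A → Fin A) → ℝ} (hw₀ : ∀ i ∈ I, 0 < w₀ i)
    {w : B → ℝ} (hw : ∀ b ∈ J, 0 < w b) {M : ℕ → B → ℝ} {est : ℕ → B → Ω → Fin A → ℝ}
    (hest : ∀ t ∈ Icc 1 T, ∀ b ∈ J, ∀ a, Measurable[𝔉 t] fun ω ↦ est t b ω a)
    (hest_mem : ∀ t ∈ Icc 1 T, ∀ b ∈ J, ∀ a, ∀ᵐ ω ∂μ, w b * M t b * est t b ω a ∈ Set.Icc 0 L)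
    {ℓ : ℕ → Ω → Fin A → ℝ}
    (hcond : ∀ t ∈ Icc 1 T, ∀ b ∈ J, ∀ a,
      μ[fun ω ↦ est t b ω a | 𝔉 (t - 1)] =ᵐ[μ] fun ω ↦ ℓ t ω a)
    {p : ℕ → Ω → Fin A → ℝ} (hp : ∀ t ∈ Icc 1 T, ∀ a, Measurable[𝔉 (t - 1)] fun ω ↦ p t ω a)
    (hp_mem : ∀ t ∈ Icc 1 T, ∀ ω, p t ω ∈ stdSimplex ℝ (Fin A))
    {x y : ℕ → B × (Fin A → Fin A) → Ω → ℝ}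
    (hx : ∀ t i ω, x t i ω = w i.1 * M t i.1 * ip (p t ω) (est t i.1 ω))
    (hy : ∀ t i ω, y t i ω = w i.1 * M t i.1 * ip (pushf i.2 (p t ω)) (est t i.1 ω))
    (hstat : ∀ t ∈ Icc 1 T, ∀ᵐ ω ∂μ, ∀ a,
      ∑ i ∈ I, hedgeWeight η L w₀ x y (t - 1) i ω * (w i.1 * M t i.1) * p t ω a =
        ∑ i ∈ I, hedgeWeight η L w₀ x y (t - 1) i ω * (w i.1 * M t i.1) *
          pushf i.2 (p t ω) a) :
    ENNReal.ofReal (1 - δ) ≤ μ {ω | ∀ i ∈ I,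
      ∑ t ∈ Icc 1 T,
          M t i.1 * (ip (p t ω) (est t i.1 ω) - ip (pushf i.2 (p t ω)) (est t i.1 ω)) ≤
        η * L * ∑ t ∈ Icc 1 T, M t i.1 * ip (p t ω) (est t i.1 ω) +
          Real.log ((∑ j ∈ I, w₀ j) / δ / w₀ i) / (η * w i.1)} := by
  have hp_meas : ∀ t ∈ Icc 1 T, Measurable[𝔉 (t - 1)] (p t) := fun t ht ↦
    (@measurable_pi_iff _ _ _ (𝔉 (t - 1)) _ _).2 (hp t ht)
  have hest_meas : ∀ t ∈ Icc 1 T, ∀ b ∈ J,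
      Measurable[𝔉 t] fun ω ↦ (w b * M t b) • est t b ω := fun t ht b hb ↦
    (@measurable_pi_iff _ _ _ (𝔉 t) _ _).2 fun a ↦ (hest t ht b hb a).const_mul _
  have hcond_scaled : ∀ t ∈ Icc 1 T, ∀ b ∈ J, ∀ a,
      μ[fun ω ↦ ((w b * M t b) • est t b ω) a | 𝔉 (t - 1)] =ᵐ[μ]
        fun ω ↦ w b * M t b * ℓ t ω a := fun t ht b hb a ↦
    (condExp_smul _ _ _).trans ((hcond t ht b hb a).const_smul _)
  refine (ofReal_one_sub_le_measure_hedge_regret_le_of_stationary hη hL hδ hI hw₀ hp_meas hp_mem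
    (fun t ht i _ ↦ (measurable_pushf i.2).comp (hp_meas t ht))
    (fun t ht i _ ω ↦ pushf_mem_stdSimplex i.2 (hp_mem t ht ω))
    (fun t ht i hi ↦ hest_meas t ht i.1 (hIJ i hi)) (fun t ht i hi ↦ hest_mem t ht i.1 (hIJ i hi))
    (fun t ht i hi ↦ hcond_scaled t ht i.1 (hIJ i hi))
    (fun t i ω ↦ (hx t i ω).trans (ip_smul _ _ _).symm)
    (fun t i ω ↦ (hy t i ω).trans (ip_smul _ _ _).symm) hstat).trans
    (measure_mono fun ω hω i hi ↦ sum_mul_sub_le_of_scaled (hw _ (hIJ i hi)) ?_)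
  simpa only [hx, hy] using hω i hi

section Prior

variable {A : ℕ} {B : Type*} [DecidableEq B] {Bs Be : Finset B}

/-- The initial weight of the expert `(b, ψ)`: `A ^ A` if `b ∈ Be`, and `A` otherwise. Since there
are `A` external and `A ^ A` swap modifications, every index `b` has the same total weight. -/
def wideRangePrior (Be : Finset B) (bψ : B × (Fin A → Fin A)) : ℝ :=
  if bψ.1 ∈ Be then (A : ℝ) ^ A else A

lemma wideRangePrior_pos (hA : 0 < A) (bψ : B × (Fin A → Fin A)) : 0 < wideRangePrior Be bψ := by
  unfold wideRangePrior
  positivity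

lemma card_PsiE (A : ℕ) : (PsiE A).card = A := by
  rcases A.eq_zero_or_pos with rfl | hA
  · rfl
  · have : Nonempty (Fin A) := ⟨⟨0, hA⟩⟩
    rw [PsiE, card_image_of_injective _ Function.const_injective, card_fin]

lemma sum_wideRangePrior (hdisj : Disjoint Bs Be) :
    ∑ bψ ∈ Bs ×ˢ univ ∪ Be ×ˢ PsiE A, wideRangePrior Be bψ =
      ((Bs.card : ℝ) + Be.card) * (A : ℝ) ^ A * A := by
  have hswap : ∀ bψ ∈ Bs ×ˢ (univ : Finset (Fin A → Fin A)), wideRangePrior Be bψ = A :=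
    fun _ h ↦ if_neg (disjoint_left.1 hdisj (mem_product.1 h).1)
  have hext : ∀ bψ ∈ Be ×ˢ PsiE A, wideRangePrior Be bψ = (A : ℝ) ^ A :=
    fun _ h ↦ if_pos (mem_product.1 h).1
  rw [sum_union (disjoint_product.2 (.inl hdisj)), sum_congr rfl hswap, sum_congr rfl hext,
    sum_const, sum_const, card_product, card_product, card_PsiE, card_univ, Fintype.card_fun,
    Fintype.card_fin, nsmul_eq_mul, nsmul_eq_mul]
  push_cast
  ring

end Prior

/-- High-probability wide-range regret bound of stochastic wide-range Hedge (swap part):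
with probability at least `1 − p†`, simultaneously for all `b ∈ B^s` and all swap
modifications `ψ`,
`∑_t M^t_b (⟨p^t, ℓ̃^t_b⟩ − ⟨ψ∘p^t, ℓ̃^t_b⟩)
  ≤ η·L̄·∑_t M^t_b ⟨p^t, ℓ̃^t_b⟩ + log((|B^s|+|B^e|)·A^A/p†)/(η·w_b)`. -/
theorem stmt5
    (A : ℕ) (hA : 1 ≤ A)
    (B : Type) [Fintype B] [DecidableEq B]
    (Bs Be : Finset B) (hdisj : Disjoint Bs Be)
    (hBs : Bs.Nonempty) (hBe : Be.Nonempty)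
    (ℐ : Finset (B × (Fin A → Fin A)))
    (hℐ : ℐ = Bs ×ˢ (Finset.univ : Finset (Fin A → Fin A)) ∪ Be ×ˢ PsiE A)
    {Ω : Type} [mΩ : MeasurableSpace Ω] (μ : Measure Ω) [IsProbabilityMeasure μ]
    (𝔉 : Filtration ℕ mΩ)
    (T : ℕ) (hT : 1 ≤ T)
    (M : ℕ → B → ℝ) (hM : ∀ t ∈ Finset.Icc 1 T, ∀ b ∈ Bs ∪ Be, 0 ≤ M t b)
    (wb : B → ℝ) (hwb : ∀ b ∈ Bs ∪ Be, 0 < wb b)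
    (Lbar η pdag : ℝ) (hL : 0 < Lbar) (hη : 0 < η) (hpdag : 0 < pdag ∧ pdag < 1)
    (ℓt : ℕ → B → Ω → Fin A → ℝ)
    (hℓtmeas : ∀ t ∈ Finset.Icc 1 T, ∀ b ∈ Bs ∪ Be, ∀ a,
      Measurable[𝔉 t] fun ω => ℓt t b ω a)
    (hℓtnonneg : ∀ t ∈ Finset.Icc 1 T, ∀ b ∈ Bs ∪ Be, ∀ ω, ∀ a, 0 ≤ ℓt t b ω a)
    (hbd : ∀ t ∈ Finset.Icc 1 T, ∀ b ∈ Bs ∪ Be, ∀ a : Fin A,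
      ∀ᵐ ω ∂μ, (wb b * M t b) * ℓt t b ω a ≤ Lbar)
    (ℓ : ℕ → Ω → Fin A → ℝ)
    (hℓmeas : ∀ t ∈ Finset.Icc 1 T, ∀ a, Measurable[𝔉 (t - 1)] fun ω => ℓ t ω a)
    (hcond : ∀ t ∈ Finset.Icc 1 T, ∀ b ∈ Bs ∪ Be, ∀ a : Fin A,
      μ[(fun ω => ℓt t b ω a)|𝔉 (t - 1)] =ᵐ[μ] fun ω => ℓ t ω a)
    (p : ℕ → Ω → Fin A → ℝ)
    (hpmeas : ∀ t ∈ Finset.Icc 1 T, ∀ a, Measurable[𝔉 (t - 1)] fun ω => p t ω a)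
    (hpprob : ∀ t ∈ Finset.Icc 1 T, ∀ ω, (∀ a, 0 ≤ p t ω a) ∧ ∑ a, p t ω a = 1)
    (W : ℕ → Ω → B × (Fin A → Fin A) → ℝ)
    (hW : ∀ t ω, ∀ bψ : B × (Fin A → Fin A), W t ω bψ =
      (if bψ.1 ∈ Be then (A : ℝ) ^ (A : ℕ) else (A : ℝ)) *
        Real.exp (η * ∑ s ∈ Finset.Icc 1 t,
          (Real.exp (-η * Lbar) * (wb bψ.1 * M s bψ.1) * ip (p s ω) (ℓt s bψ.1 ω)
            - (wb bψ.1 * M s bψ.1) * ip (pushf bψ.2 (p s ω)) (ℓt s bψ.1 ω))))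
    (hstat : ∀ t ∈ Finset.Icc 1 T, ∀ᵐ ω ∂μ, ∀ a : Fin A,
      ∑ bψ ∈ ℐ, W (t - 1) ω bψ * (wb bψ.1 * M t bψ.1) * p t ω a
        = ∑ bψ ∈ ℐ, W (t - 1) ω bψ * (wb bψ.1 * M t bψ.1) * pushf bψ.2 (p t ω) a) :
    ENNReal.ofReal (1 - pdag) ≤
      μ {ω | ∀ b ∈ Bs, ∀ ψ : Fin A → Fin A,
        ∑ t ∈ Finset.Icc 1 T,
            M t b * (ip (p t ω) (ℓt t b ω) - ip (pushf ψ (p t ω)) (ℓt t b ω))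
          ≤ η * Lbar * ∑ t ∈ Finset.Icc 1 T, M t b * ip (p t ω) (ℓt t b ω)
            + Real.log (((Bs.card : ℝ) + (Be.card : ℝ)) * (A : ℝ) ^ (A : ℕ) / pdag)
              / (η * wb b)} := by
  obtain rfl := hℐ
  have hfst : ∀ bψ ∈ Bs ×ˢ univ ∪ Be ×ˢ PsiE A, bψ.1 ∈ Bs ∪ Be := fun _ h ↦
    mem_union.2 ((mem_union.1 h).imp (fun hs ↦ (mem_product.1 hs).1) fun he ↦ (mem_product.1 he).1)
  have hloss_mem : ∀ t ∈ Icc 1 T, ∀ b ∈ Bs ∪ Be, ∀ a,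
      ∀ᵐ ω ∂μ, wb b * M t b * ℓt t b ω a ∈ Set.Icc 0 Lbar := fun t ht b hb a ↦ by
    filter_upwards [hbd t ht b hb a] with ω hω
    exact ⟨mul_nonneg (mul_nonneg (hwb b hb).le (hM t ht b hb)) (hℓtnonneg t ht b hb ω a), hω⟩
  have hW_eq t ω bψ : W t ω bψ = hedgeWeight η Lbar (wideRangePrior Be)
      (fun s i ω ↦ wb i.1 * M s i.1 * ip (p s ω) (ℓt s i.1 ω))
      (fun s i ω ↦ wb i.1 * M s i.1 * ip (pushf i.2 (p s ω)) (ℓt s i.1 ω)) t bψ ω := by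
    simp only [hW, hedgeWeight, wideRangePrior, mul_assoc]
  simp only [hW_eq] at hstat
  refine (ofReal_one_sub_le_measure_wideRange_regret_le hη hL hpdag.1
    ((hBs.product ⟨id, mem_univ id⟩).mono subset_union_left) hfst
    (fun bψ _ ↦ wideRangePrior_pos hA bψ) hwb hℓtmeas hloss_mem hcond hpmeas hpprob
    (fun _ _ _ ↦ rfl) (fun _ _ _ ↦ rfl) hstat).trans (measure_mono fun ω hω b hb ψ ↦ ?_)
  have hregret := hω (b, ψ) (mem_union_left _ (mk_mem_product hb (mem_univ ψ)))
  rwa [sum_wideRangePrior hdisj, wideRangePrior, if_neg (disjoint_left.1 hdisj hb),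
    div_right_comm, mul_div_cancel_right₀ _ (Nat.cast_ne_zero.2 (Nat.ne_of_gt hA))] at hregret
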